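/- Let C be a [q+1, q-3, 5]_q MDS code of length n = q+1 and minimum distance d = 5, and let w be a natural number with 4 ≤ w ≤ q+1. Then the overall number A_w^Σ(V^{(1)}) of Hamming-weight-w vectors lying in cosets of C of weight exactly 1 satisfies A_w^Σ(V^{(1)}) = (q^2 - 1) · [ A_w(C) - ε · ( C(q+1, w) C(w-1, 3) - C(q, w-1) C(w-2, 2) ) ], as an identity of integers, where ε = (-1)^{w-5}. -/

import Mathlib

open Finset

/-- The weight of the coset `x + C` of the linear code `C ⊆ F_q^n`, i.e. the smallest
Hamming weight of a vector in `x + C`; equivalently the Hamming distance from `x` to `C`. -/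
noncomputable def cosetWeight {F : Type*} [Field F] [Fintype F] [DecidableEq F] {n : ℕ}
    (C : Submodule F (Fin n → F)) (x : Fin n → F) : ℕ :=
  sInf {m : ℕ | ∃ c ∈ C, hammingNorm (x - c) = m}

/-- `A_w(C)`: the number of codewords of `C` of Hamming weight `w`. -/
noncomputable def numCodewordsOfWeight {F : Type*} [Field F] [Fintype F] [DecidableEq F] {n : ℕ}
    (C : Submodule F (Fin n → F)) (w : ℕ) : ℕ :=
  {x : Fin n → F | x ∈ C ∧ hammingNorm x = w}.ncard

/-- `A_w^Σ(V^{(W)})`: the overall number of Hamming-weight-`w` vectors of `F_q^n` lying in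
cosets of `C` of weight exactly `W`. -/
noncomputable def numVectorsCosetExact {F : Type*} [Field F] [Fintype F] [DecidableEq F] {n : ℕ}
    (C : Submodule F (Fin n → F)) (w W : ℕ) : ℕ :=
  {x : Fin n → F | hammingNorm x = w ∧ cosetWeight C x = W}.ncard

/-- `A_w^Σ(V^{≤W})`: the overall number of Hamming-weight-`w` vectors of `F_q^n` lying in
cosets of `C` of weight at most `W`. -/
noncomputable def numVectorsCosetLe {F : Type*} [Field F] [Fintype F] [DecidableEq F] {n : ℕ}
    (C : Submodule F (Fin n → F)) (w W : ℕ) : ℕ :=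
  {x : Fin n → F | hammingNorm x = w ∧ cosetWeight C x ≤ W}.ncard

/-- The code `C` has minimum distance `d`: every nonzero codeword has Hamming weight at
least `d`, and some nonzero codeword has Hamming weight exactly `d`. -/
def HasMinDist {F : Type*} [Field F] [Fintype F] [DecidableEq F] {n : ℕ}
    (C : Submodule F (Fin n → F)) (d : ℕ) : Prop :=
  (∀ c ∈ C, c ≠ 0 → d ≤ hammingNorm c) ∧ ∃ c ∈ C, c ≠ 0 ∧ hammingNorm c = d

/-- The code `C` has covering radius `R`: every vector of `F_q^n` is at Hamming distance at
most `R` from `C` and some vector is at Hamming distance exactly `R` from `C`. -/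
def HasCoveringRadius {F : Type*} [Field F] [Fintype F] [DecidableEq F] {n : ℕ}
    (C : Submodule F (Fin n → F)) (R : ℕ) : Prop :=
  (∀ x : Fin n → F, cosetWeight C x ≤ R) ∧ ∃ x : Fin n → F, cosetWeight C x = R

/-- `V_m(t) = ∑_{i=0}^t (q-1)^i C(m,i)`, the volume of a Hamming sphere of radius `t`
in `F_q^m`, as a rational number. -/
def sphereVol (q m t : ℕ) : ℚ :=
  ∑ i ∈ Finset.range (t + 1), ((q : ℚ) - 1) ^ i * (m.choose i : ℚ)

/-!
Since `d ≥ 3`, the balls of radius `1` around codewords are disjoint, so a vector in a coset of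
weight `1` is obtained by changing exactly one coordinate of a unique codeword. Counting the changes
that lead to weight `w` expresses `A_w^Σ(V^{(1)})` through `A_{w-1}(C)`, `A_w(C)` and `A_{w+1}(C)`.

For an MDS code of redundancy `r = n - k = d - 1`, the number of codewords supported in a set of
size `s` is `q ^ max (s - r, 0)`, and Möbius inversion gives `A_w(C) = C(n, w) B_w`, with `B_w` the
`w`-th finite difference at `0` of that function of `s`. The function is multiplied by `q` when `s`
increases by `1`, except when `s < r`; hence `B_{w+1} = (q - 1) B_w` up to an explicit binomial
term. Eliminating `A_{w-1}(C)` and `A_{w+1}(C)` leaves `n (q - 1) A_w(C)` and the binomial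
correction.
-/

open Module

section FwdDiff

theorem fwdDiff_iter_succ_ite_lt_zero (w r : ℕ) :
    (fwdDiff 1)^[w + 1] (fun s : ℕ ↦ if s < r + 1 then (1 : ℤ) else 0) 0 =
      (-1) ^ (w + 1 + r) * (w.choose r : ℤ) := by
  have fwdDiff_ite (r : ℕ) : fwdDiff 1 (fun s : ℕ ↦ if s < r + 1 then (1 : ℤ) else 0) =
      (fun s ↦ if s < r then 1 else 0) + (-1 : ℤ) • fun s ↦ if s < r + 1 then 1 else 0 := by
    ext s
    simp [fwdDiff, sub_eq_add_neg]
  induction w generalizing r with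
  | zero => cases r <;> simp [fwdDiff]
  | succ w ih =>
    rw [Function.iterate_succ_apply, fwdDiff_ite, fwdDiff_iter_add, fwdDiff_iter_const_smul,
      Pi.add_apply, Pi.smul_apply, ih]
    cases r with
    | zero =>
      have fwdDiff_zero : (fwdDiff 1)^[w + 1] (fun _ : ℕ ↦ (0 : ℤ)) = fun _ ↦ 0 :=
        Function.iterate_fixed (fwdDiff_const 1 0) _
      simp [fwdDiff_zero, pow_succ]
    | succ r =>
      rw [ih, Nat.choose_succ_succ]
      push_cast
      simp only [smul_eq_mul]
      ring

/-- The number of codewords with a prescribed support of size `w` in an MDS code of redundancy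
`r = n - k` over a field of `q` elements, obtained by Möbius inversion from the number
`q ^ (s - r)` of codewords supported in a set of size `s`, where `s - r` is truncated at `0`. -/
def mdsSupportCount (q : ℤ) (r w : ℕ) : ℤ :=
  (fwdDiff 1)^[w] (fun s : ℕ ↦ q ^ (s - r)) 0

theorem sum_choose_mul_mdsSupportCount (q : ℤ) (r s : ℕ) :
    ∑ w ∈ range (s + 1), (s.choose w : ℤ) * mdsSupportCount q r w = q ^ (s - r) := by
  simpa [mdsSupportCount] using (shift_eq_sum_fwdDiff_iter 1 (fun s : ℕ ↦ q ^ (s - r)) s 0).symm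

theorem mdsSupportCount_add_two (q : ℤ) (r w : ℕ) :
    mdsSupportCount q (r + 1) (w + 2) =
      (q - 1) * (mdsSupportCount q (r + 1) (w + 1) + (-1) ^ (w + r) * (w.choose r : ℤ)) := by
  have fwdDiff_pow : fwdDiff 1 (fun s : ℕ ↦ q ^ (s - (r + 1))) =
      (q - 1) • ((fun s ↦ q ^ (s - (r + 1))) + (-1 : ℤ) • fun s ↦ if s < r + 1 then 1 else 0) := by
    ext s
    obtain hs | hs := lt_or_ge s (r + 1)
    · simp [fwdDiff, Nat.lt_succ_iff.1 hs, Nat.sub_eq_zero_of_le hs.le, Nat.sub_eq_zero_of_le hs]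
    · simp only [fwdDiff, Nat.sub_add_comm hs, Pi.smul_apply, Pi.add_apply, hs.not_gt, if_false,
        smul_eq_mul]
      ring
  rw [mdsSupportCount, Function.iterate_succ_apply, fwdDiff_pow, fwdDiff_iter_const_smul,
    fwdDiff_iter_add, fwdDiff_iter_const_smul, Pi.smul_apply, Pi.add_apply, Pi.smul_apply,
    fwdDiff_iter_succ_ite_lt_zero, mdsSupportCount]
  simp only [smul_eq_mul]
  ring

end FwdDiff

theorem cast_add_one_mul_choose_add_one (n k : ℕ) :
    ((k : ℤ) + 1) * n.choose (k + 1) = (n - k) * n.choose k := by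
  obtain h | h := le_or_gt k n
  · have := Nat.choose_succ_right_eq n k
    zify [h] at this
    linear_combination this
  · simp [Nat.choose_eq_zero_of_lt h, Nat.choose_eq_zero_of_lt (Nat.lt_succ_of_lt h)]

theorem eq_of_forall_sum_powerset_eq {α M : Type*} [AddCancelCommMonoid M] {f g : Finset α → M}
    (h : ∀ S : Finset α, ∑ T ∈ S.powerset, f T = ∑ T ∈ S.powerset, g T) : f = g := by
  classical
  ext S
  induction S using Finset.strongInduction with
  | H S ih =>
    have sum_ssubsets_eq : ∑ T ∈ S.ssubsets, f T = ∑ T ∈ S.ssubsets, g T :=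
      sum_congr rfl fun T hT ↦ ih T (mem_ssubsets.1 hT)
    have sum_insert_ssubsets (u : Finset α → M) :
        ∑ T ∈ S.powerset, u T = u S + ∑ T ∈ S.ssubsets, u T :=
      (add_sum_erase _ u (mem_powerset_self S)).symm
    have := h S
    rw [sum_insert_ssubsets, sum_insert_ssubsets, sum_ssubsets_eq] at this
    exact add_right_cancel this

section Hamming

variable {ι α : Type*} [Fintype ι] [DecidableEq ι] [DecidableEq α]

theorem hammingDist_eq_one_iff {x c : ι → α} :
    hammingDist x c = 1 ↔ ∃ i, ∃ b ≠ c i, Function.update c i b = x := by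
  constructor
  · intro h
    obtain ⟨i, hi⟩ := card_eq_one.1 h
    simp only [Finset.ext_iff, mem_filter_univ, mem_singleton] at hi
    refine ⟨i, x i, (hi i).2 rfl, Function.update_eq_iff.2 ⟨rfl, fun j hj ↦ ?_⟩⟩
    exact not_not.1 fun h ↦ hj ((hi j).1 (Ne.symm h))
  · rintro ⟨i, b, hb, rfl⟩
    refine card_eq_one.2 ⟨i, ?_⟩
    ext j
    obtain rfl | hj := eq_or_ne j i <;> simp [*]

theorem hammingNorm_update_add [Zero α] (c : ι → α) (i : ι) (b : α) :
    hammingNorm (Function.update c i b) + (if c i = 0 then 0 else 1) =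
      hammingNorm c + if b = 0 then 0 else 1 := by
  have hammingNorm_eq (x : ι → α) : hammingNorm x =
      (if x i = 0 then 0 else 1) + ∑ j ∈ univ.erase i, if x j = 0 then 0 else 1 := by
    rw [add_sum_erase _ (fun j ↦ if x j = 0 then 0 else 1) (mem_univ i)]
    simp [hammingNorm, card_filter]
  have sum_erase_update : (∑ j ∈ univ.erase i, if Function.update c i b j = 0 then 0 else 1) =
      ∑ j ∈ univ.erase i, if c j = 0 then 0 else 1 :=
    sum_congr rfl fun j hj ↦ by rw [Function.update_of_ne (ne_of_mem_erase hj)]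
  rw [hammingNorm_eq, hammingNorm_eq c, sum_erase_update, Function.update_self]
  omega

variable [Fintype α]

theorem card_filter_hammingDist_eq_one (c : ι → α) (p : (ι → α) → Prop) [DecidablePred p] :
    #{x | p x ∧ hammingDist x c = 1} = ∑ i, #{b | b ≠ c i ∧ p (Function.update c i b)} := by
  rw [← card_sigma]
  symm
  refine card_bij (fun ib _ ↦ Function.update c ib.1 ib.2) ?_ ?_ ?_
  · rintro ⟨i, b⟩ hb
    simp only [mem_sigma, mem_univ, true_and, mem_filter_univ] at hb
    exact mem_filter_univ _ |>.2 ⟨hb.2, hammingDist_eq_one_iff.2 ⟨i, b, hb.1, rfl⟩⟩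
  · rintro ⟨i, b⟩ hb ⟨j, b'⟩ - h
    simp only [mem_sigma, mem_univ, true_and, mem_filter_univ] at hb
    have apply_i := congrFun h i
    obtain rfl | hij := eq_or_ne i j
    · simpa using apply_i
    · exact absurd (by simpa [hij] using apply_i) hb.1
  · intro x hx
    obtain ⟨hp, hx⟩ := mem_filter_univ _ |>.1 hx
    obtain ⟨i, b, hb, rfl⟩ := hammingDist_eq_one_iff.1 hx
    exact ⟨⟨i, b⟩, by simp [hb, hp], rfl⟩

variable [Zero α] {c : ι → α} {i : ι}

theorem card_filter_hammingNorm_update_of_eq_zero (hi : c i = 0) (w : ℕ) :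
    #{b | b ≠ c i ∧ hammingNorm (Function.update c i b) = w} =
      if w = hammingNorm c + 1 then Fintype.card α - 1 else 0 := by
  have filter_eq : ({b | b ≠ c i ∧ hammingNorm (Function.update c i b) = w} : Finset α) =
      if w = hammingNorm c + 1 then univ.erase 0 else ∅ := by
    ext b
    have := hammingNorm_update_add c i b
    grind
  rw [filter_eq]
  split_ifs <;> simp [card_erase_of_mem]

theorem card_filter_hammingNorm_update_of_ne_zero (hi : c i ≠ 0) (w : ℕ) :
    #{b | b ≠ c i ∧ hammingNorm (Function.update c i b) = w} =
      (if w = hammingNorm c then Fintype.card α - 2 else 0) +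
        if w + 1 = hammingNorm c then 1 else 0 := by
  have filter_eq : ({b | b ≠ c i ∧ hammingNorm (Function.update c i b) = w} : Finset α) =
      if w = hammingNorm c then (univ.erase 0).erase (c i)
      else if w + 1 = hammingNorm c then {0} else ∅ := by
    ext b
    have := hammingNorm_update_add c i b
    grind
  have card_erase_erase : #((univ.erase 0).erase (c i)) = Fintype.card α - 2 := by
    rw [card_erase_of_mem (by simp [hi]), card_erase_of_mem (mem_univ _), card_univ, Nat.sub_sub]
  rw [filter_eq]
  split_ifs <;> simp_all

theorem card_filter_hammingNorm_eq_and_hammingDist_eq_one (c : ι → α) (w : ℕ) :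
    #{x | hammingNorm x = w ∧ hammingDist x c = 1} =
      (if w = hammingNorm c + 1
        then (Fintype.card ι - hammingNorm c) * (Fintype.card α - 1) else 0) +
      (if w = hammingNorm c then hammingNorm c * (Fintype.card α - 2) else 0) +
      if w + 1 = hammingNorm c then hammingNorm c else 0 := by
  have card_nonzero : #{i | c i ≠ 0} = hammingNorm c := rfl
  have card_zero : #{i | c i = 0} = Fintype.card ι - hammingNorm c := by
    have := card_filter_add_card_filter_not (s := univ) fun i ↦ c i = 0
    rw [card_univ, card_nonzero] at this
    omega
  calc
    #{x | hammingNorm x = w ∧ hammingDist x c = 1}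
      = ∑ i, #{b | b ≠ c i ∧ hammingNorm (Function.update c i b) = w} :=
        card_filter_hammingDist_eq_one c _
    _ = ∑ i with c i = 0, (if w = hammingNorm c + 1 then Fintype.card α - 1 else 0) +
        ∑ i with c i ≠ 0, ((if w = hammingNorm c then Fintype.card α - 2 else 0) +
          if w + 1 = hammingNorm c then 1 else 0) := by
        rw [← sum_filter_add_sum_filter_not univ (fun i ↦ c i = 0)]
        congr 1
        · exact sum_congr rfl fun i hi ↦
            card_filter_hammingNorm_update_of_eq_zero (mem_filter.1 hi).2 w
        · exact sum_congr rfl fun i hi ↦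
            card_filter_hammingNorm_update_of_ne_zero (mem_filter.1 hi).2 w
    _ = _ := by
        simp only [sum_const, card_zero, card_nonzero, smul_eq_mul, mul_add, mul_ite, mul_zero,
          mul_one, add_assoc]

end Hamming

section AdditiveCode

variable {ι α σ : Type*} [Fintype ι] [AddCommGroup α] [DecidableEq α]

theorem hammingDist_eq_hammingNorm_sub (x y : ι → α) : hammingDist x y = hammingNorm (x - y) := by
  rw [hammingDist_comm, hammingDist_eq_hammingNorm, neg_add_eq_sub]

variable [SetLike σ (ι → α)] [AddSubgroupClass σ (ι → α)] {C : σ}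

theorem le_hammingDist_of_mem {d : ℕ} (hmin : ∀ c ∈ C, c ≠ 0 → d ≤ hammingNorm c)
    {x y : ι → α} (hx : x ∈ C) (hy : y ∈ C) (hxy : x ≠ y) : d ≤ hammingDist x y := by
  rw [hammingDist_eq_hammingNorm_sub]
  exact hmin _ (sub_mem hx hy) (sub_ne_zero.2 hxy)

theorem eq_of_hammingDist_eq {W : ℕ} (hmin : ∀ c ∈ C, c ≠ 0 → 2 * W < hammingNorm c)
    {x c c' : ι → α} (hc : c ∈ C) (hc' : c' ∈ C) (h : hammingDist x c = W)
    (h' : hammingDist x c' = W) : c = c' := by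
  by_contra hne
  have := le_hammingDist_of_mem hmin hc hc' hne
  have := hammingDist_triangle_left c c' x
  omega

end AdditiveCode

/-- The support of a word as a finset, so that `hammingNorm x = #(hammingSupport x)`
holds definitionally. -/
def hammingSupport {ι α : Type*} [Fintype ι] [Zero α] [DecidableEq α] (x : ι → α) : Finset ι :=
  {i | x i ≠ 0}

section LinearCode

variable {ι F : Type*} [Field F]

variable (F) in
/-- The coordinate subspace of words vanishing outside `S`. Its intersection with a code is the
code shortened at the complement of `S`. -/
def coordinateSubspace (S : Finset ι) : Submodule F (ι → F) :=
  ⨅ i ∈ (S : Set ι)ᶜ, LinearMap.ker (LinearMap.proj i)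

theorem coordinateSubspace_mono {S T : Finset ι} (h : S ⊆ T) :
    coordinateSubspace F S ≤ coordinateSubspace F T :=
  biInf_mono fun _ hi hiS ↦ hi (h hiS)

theorem finrank_coordinateSubspace (S : Finset ι) : finrank F (coordinateSubspace F S) = #S := by
  classical
  rw [coordinateSubspace, (LinearMap.iInfKerProjEquiv F (fun _ : ι ↦ F) disjoint_compl_right
    (Set.union_compl_self (S : Set ι)).ge).finrank_eq]
  simp

variable [Fintype ι] [DecidableEq F] {C : Submodule F (ι → F)} {r : ℕ}

theorem mem_coordinateSubspace {S : Finset ι} {x : ι → F} :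
    x ∈ coordinateSubspace F S ↔ hammingSupport x ⊆ S := by
  simp [coordinateSubspace, hammingSupport, subset_iff, not_imp_comm]

theorem inf_coordinateSubspace_eq_bot (hmin : ∀ c ∈ C, c ≠ 0 → r < hammingNorm c) {S : Finset ι}
    (hS : #S ≤ r) : C ⊓ coordinateSubspace F S = ⊥ := by
  refine (Submodule.eq_bot_iff _).2 fun c ⟨hcC, hcS⟩ ↦ by_contra fun hc ↦ ?_
  have : hammingNorm c ≤ #S := card_le_card (mem_coordinateSubspace.1 hcS)
  have := hmin c hcC hc
  omega

theorem finrank_inf_coordinateSubspace (hdim : finrank F C + r = Fintype.card ι)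
    (hmin : ∀ c ∈ C, c ≠ 0 → r < hammingNorm c) (S : Finset ι) :
    finrank F (C ⊓ coordinateSubspace F S : Submodule F (ι → F)) = #S - r := by
  have lower_bound : #S ≤ finrank F (C ⊓ coordinateSubspace F S : Submodule F (ι → F)) + r := by
    have finrank_sup := Submodule.finrank_sup_add_finrank_inf_eq C (coordinateSubspace F S)
    have finrank_sup_le := Submodule.finrank_le (C ⊔ coordinateSubspace F S)
    rw [finrank_coordinateSubspace] at finrank_sup
    rw [finrank_fintype_fun_eq_card] at finrank_sup_le
    omega
  obtain ⟨U, hUS, hU⟩ := exists_subset_card_eq (min_le_left #S r)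
  have upper_bound :
      finrank F (C ⊓ coordinateSubspace F S : Submodule F (ι → F)) + #U ≤ #S := by
    have inf_eq_bot : C ⊓ coordinateSubspace F S ⊓ coordinateSubspace F U = ⊥ := by
      rw [inf_assoc, inf_eq_right.2 (coordinateSubspace_mono hUS),
        inf_coordinateSubspace_eq_bot hmin (hU.trans_le (min_le_right _ _))]
    have finrank_sup := Submodule.finrank_sup_add_finrank_inf_eq (C ⊓ coordinateSubspace F S)
      (coordinateSubspace F U)
    rw [inf_eq_bot, finrank_bot, add_zero, finrank_coordinateSubspace] at finrank_sup
    rw [← finrank_sup, ← finrank_coordinateSubspace (F := F) S]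
    exact Submodule.finrank_mono (sup_le inf_le_right (coordinateSubspace_mono hUS))
  omega

variable [Fintype F] [DecidableEq ι] [DecidablePred (· ∈ C)]

theorem card_codewords_hammingSupport_subset (hdim : finrank F C + r = Fintype.card ι)
    (hmin : ∀ c ∈ C, c ≠ 0 → r < hammingNorm c) (S : Finset ι) :
    #{c | c ∈ C ∧ hammingSupport c ⊆ S} = Fintype.card F ^ (#S - r) := by
  rw [← finrank_inf_coordinateSubspace hdim hmin S, ← Nat.card_eq_fintype_card,
    ← natCard_eq_pow_finrank]
  exact (Nat.subtype_card _ fun c ↦ by simp [mem_coordinateSubspace]).symm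

theorem card_codewords_hammingSupport_eq (hdim : finrank F C + r = Fintype.card ι)
    (hmin : ∀ c ∈ C, c ≠ 0 → r < hammingNorm c) (S : Finset ι) :
    (#{c | c ∈ C ∧ hammingSupport c = S} : ℤ) = mdsSupportCount (Fintype.card F) r #S := by
  refine congrFun (f := fun S ↦ (#{c | c ∈ C ∧ hammingSupport c = S} : ℤ))
    (g := fun S ↦ mdsSupportCount (Fintype.card F) r #S)
    (eq_of_forall_sum_powerset_eq fun S ↦ ?_) S
  calc
    ∑ T ∈ S.powerset, (#{c | c ∈ C ∧ hammingSupport c = T} : ℤ)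
      = #{c | c ∈ C ∧ hammingSupport c ⊆ S} := by
        simp only [← filter_filter, ← mem_powerset (t := S), ← sum_card_fiberwise_eq_card_filter,
          Nat.cast_sum]
    _ = Fintype.card F ^ (#S - r) := by
        exact_mod_cast card_codewords_hammingSupport_subset hdim hmin S
    _ = ∑ T ∈ S.powerset, mdsSupportCount (Fintype.card F) r #T := by
        simp [sum_powerset_apply_card, sum_choose_mul_mdsSupportCount]

theorem card_codewords_hammingNorm_eq (hdim : finrank F C + r = Fintype.card ι)
    (hmin : ∀ c ∈ C, c ≠ 0 → r < hammingNorm c) (w : ℕ) :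
    (#{c | c ∈ C ∧ hammingNorm c = w} : ℤ) =
      (Fintype.card ι).choose w * mdsSupportCount (Fintype.card F) r w := by
  calc
    (#{c | c ∈ C ∧ hammingNorm c = w} : ℤ)
      = ∑ S ∈ powersetCard w univ, (#{c | c ∈ C ∧ hammingSupport c = S} : ℤ) := by
        simp only [← filter_filter, ← Nat.cast_sum, sum_card_fiberwise_eq_card_filter,
          mem_powersetCard_univ]
        rfl
    _ = ∑ _ ∈ powersetCard w (univ : Finset ι), mdsSupportCount (Fintype.card F) r w :=
        sum_congr rfl fun _ hS ↦ by
          rw [card_codewords_hammingSupport_eq hdim hmin, mem_powersetCard_univ.1 hS]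
    _ = (Fintype.card ι).choose w * mdsSupportCount (Fintype.card F) r w := by simp

end LinearCode

section Coset

variable {F : Type*} [Field F] [Fintype F] [DecidableEq F] {n : ℕ} {C : Submodule F (Fin n → F)}

theorem exists_hammingDist_eq_cosetWeight (C : Submodule F (Fin n → F)) (x : Fin n → F) :
    ∃ c ∈ C, hammingDist x c = cosetWeight C x := by
  simp only [hammingDist_eq_hammingNorm_sub]
  exact Nat.sInf_mem (s := {m | ∃ c ∈ C, hammingNorm (x - c) = m}) ⟨_, 0, C.zero_mem, rfl⟩

theorem cosetWeight_le_hammingDist {c : Fin n → F} (hc : c ∈ C) (x : Fin n → F) :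
    cosetWeight C x ≤ hammingDist x c :=
  Nat.sInf_le ⟨c, hc, (hammingDist_eq_hammingNorm_sub x c).symm⟩

theorem cosetWeight_eq_iff {W : ℕ} (hmin : ∀ c ∈ C, c ≠ 0 → 2 * W ≤ hammingNorm c)
    {x : Fin n → F} : cosetWeight C x = W ↔ ∃ c ∈ C, hammingDist x c = W := by
  obtain ⟨c₀, hc₀, hxc₀⟩ := exists_hammingDist_eq_cosetWeight C x
  refine ⟨fun h ↦ ⟨c₀, hc₀, hxc₀.trans h⟩, ?_⟩
  rintro ⟨c, hc, hxc⟩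
  obtain rfl | hne := eq_or_ne c₀ c
  · exact hxc₀.symm.trans hxc
  · have := le_hammingDist_of_mem hmin hc₀ hc hne
    have := hammingDist_triangle_left c₀ c x
    have := cosetWeight_le_hammingDist hc x
    omega

theorem numCodewordsOfWeight_eq_card [DecidablePred (· ∈ C)] (w : ℕ) :
    numCodewordsOfWeight C w = #{c | c ∈ C ∧ hammingNorm c = w} := by
  rw [numCodewordsOfWeight, ← Set.ncard_coe_finset, coe_filter_univ]

theorem numCodewordsOfWeight_eq_choose_mul {r : ℕ} (hdim : finrank F C + r = n)
    (hmin : ∀ c ∈ C, c ≠ 0 → r < hammingNorm c) (w : ℕ) :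
    (numCodewordsOfWeight C w : ℤ) = n.choose w * mdsSupportCount (Fintype.card F) r w := by
  classical
  rw [numCodewordsOfWeight_eq_card,
    card_codewords_hammingNorm_eq (by rwa [Fintype.card_fin]) hmin, Fintype.card_fin]

theorem numVectorsCosetExact_eq_sum [DecidablePred (· ∈ C)] {W : ℕ}
    (hmin : ∀ c ∈ C, c ≠ 0 → 2 * W < hammingNorm c) (w : ℕ) :
    numVectorsCosetExact C w W =
      ∑ c with c ∈ C, #{x | hammingNorm x = w ∧ hammingDist x c = W} := by
  rw [← card_biUnion, numVectorsCosetExact, ← Set.ncard_coe_finset]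
  · congr 1
    ext x
    simp [cosetWeight_eq_iff fun c hc hc0 ↦ (hmin c hc hc0).le]
  · intro c hc c' hc' hne
    refine disjoint_filter.2 fun x _ hx hx' ↦ hne ?_
    exact eq_of_hammingDist_eq hmin (mem_filter.1 hc).2 (mem_filter.1 hc').2 hx.2 hx'.2

theorem numVectorsCosetExact_succ_one (hmin : ∀ c ∈ C, c ≠ 0 → 3 ≤ hammingNorm c) (w : ℕ) :
    (numVectorsCosetExact C (w + 1) 1 : ℤ) =
      (n - w) * (Fintype.card F - 1) * numCodewordsOfWeight C w +
      (w + 1) * (Fintype.card F - 2) * numCodewordsOfWeight C (w + 1) +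
      (w + 2) * numCodewordsOfWeight C (w + 2) := by
  classical
  have sum_codewords (v : ℕ) (f : ℕ → ℤ) :
      ∑ c with c ∈ C, (if v = hammingNorm c then f (hammingNorm c) else 0) =
        f v * numCodewordsOfWeight C v := by
    rw [← sum_filter, filter_filter, numCodewordsOfWeight_eq_card]
    simp only [eq_comm (a := v)]
    rw [sum_congr rfl fun c hc ↦ by rw [(mem_filter.1 hc).2.2], sum_const, nsmul_eq_mul, mul_comm]
  have cast_card_sub (c : Fin n → F) : ((n - hammingNorm c : ℕ) : ℤ) = n - hammingNorm c :=
    Nat.cast_sub (hammingNorm_le_card_fintype.trans_eq (Fintype.card_fin n))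
  have q_pos : 1 ≤ Fintype.card F := Fintype.card_pos
  have q_ge_two : 2 ≤ Fintype.card F := Fintype.one_lt_card
  rw [numVectorsCosetExact_eq_sum hmin]
  simp only [card_filter_hammingNorm_eq_and_hammingDist_eq_one, Fintype.card_fin,
    Nat.add_right_cancel_iff, add_assoc w 1 1]
  push_cast [cast_card_sub, q_pos, q_ge_two]
  rw [sum_add_distrib, sum_add_distrib,
    sum_codewords w fun v ↦ (n - v) * (Fintype.card F - 1),
    sum_codewords (w + 1) fun v ↦ v * (Fintype.card F - 2), sum_codewords (w + 2) fun v ↦ v]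
  push_cast
  ring

theorem add_two_mul_numCodewordsOfWeight {r : ℕ} (hdim : finrank F C + (r + 1) = n)
    (hmin : ∀ c ∈ C, c ≠ 0 → r + 1 < hammingNorm c) (w : ℕ) :
    ((w : ℤ) + 2) * numCodewordsOfWeight C (w + 2) =
      ((Fintype.card F : ℤ) - 1) * ((n - (w + 1)) * numCodewordsOfWeight C (w + 1) +
        (-1) ^ (w + r) * (w.choose r * ((w + 2) * n.choose (w + 2)))) := by
  have choose_succ := cast_add_one_mul_choose_add_one n (w + 1)
  simp only [numCodewordsOfWeight_eq_choose_mul hdim hmin, mdsSupportCount_add_two]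
  push_cast at choose_succ
  linear_combination (Fintype.card F - 1) * mdsSupportCount (Fintype.card F) (r + 1) (w + 1) *
    choose_succ

theorem numVectorsCosetExact_one_dist_five_general {d w : ℕ} (hdim : finrank F C + d = n + 1)
    (hmin : HasMinDist C d) (hd : 3 ≤ d) (hw : 2 ≤ w) :
    (numVectorsCosetExact C w 1 : ℤ) =
      n * (Fintype.card F - 1) *
        (numCodewordsOfWeight C w - (-1) ^ (w + d) *
          (n.choose w * (w - 1).choose (d - 2) -
            (n - 1).choose (w - 1) * (w - 2).choose (d - 3))) := by
  obtain ⟨s, rfl⟩ := Nat.exists_eq_add_of_le' hd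
  obtain ⟨v, rfl⟩ := Nat.exists_eq_add_of_le' hw
  obtain ⟨m, rfl⟩ : ∃ m, n = m + 1 := ⟨n - 1, by omega⟩
  have recurrence := add_two_mul_numCodewordsOfWeight (C := C) (r := s + 1) (by omega) hmin.1
  have count := numVectorsCosetExact_succ_one
    (fun c hc hc0 ↦ le_of_add_le_right (hmin.1 c hc hc0)) (v + 1)
  have rec_lower := recurrence v
  have rec_upper := recurrence (v + 1)
  have choose_upper := cast_add_one_mul_choose_add_one (m + 1) (v + 2)
  have choose_absorb : ((m : ℤ) + 1) * m.choose (v + 1) = (m + 1).choose (v + 2) * (v + 2) :=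
    mod_cast Nat.add_one_mul_choose_eq m (v + 1)
  have pascal : ((v + 1).choose (s + 1) : ℤ) = v.choose s + v.choose (s + 1) :=
    mod_cast Nat.choose_succ_succ v s
  simp only [show v + 2 - 1 = v + 1 by omega, show s + 3 - 2 = s + 1 by omega, Nat.add_sub_cancel]
  push_cast at count rec_lower rec_upper choose_upper ⊢
  linear_combination count - rec_lower + rec_upper +
    (Fintype.card F - 1) * (-1) ^ (v + s) * ((v + 1).choose (s + 1) * choose_upper +
      v.choose s * choose_absorb - (m + 1).choose (v + 2) * (v + 2) * pascal)

end Coset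

/-- **Integral weight spectrum of the weight-1 cosets of a `[q+1, q-3, 5]_q` MDS code**
(Theorem 4.4(iii), eq. (4.9)).  For a `[q+1,q-3,5]_q` MDS code and `4 ≤ w ≤ q+1`,
`A_w^Σ(V^{(1)}) = (q²-1)[ A_w(C) - (-1)^{w-5}( C(q+1,w)C(w-1,3) - C(q,w-1)C(w-2,2) ) ]`. -/
theorem numVectorsCosetExact_one_dist_five {F : Type*} [Field F] [Fintype F] [DecidableEq F]
    (q w : ℕ) (hq : Fintype.card F = q)
    (C : Submodule F (Fin (q + 1) → F))
    (hk : Module.finrank F C + 3 = q) (hmin : HasMinDist C 5)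
    (hw1 : 4 ≤ w) (hwn : w ≤ q + 1) :
    (numVectorsCosetExact C w 1 : ℤ) =
      ((q : ℤ) ^ 2 - 1) *
        ((numCodewordsOfWeight C w : ℤ)
          - (-1 : ℤ) ^ (w + 5) *
            (((q + 1).choose w : ℤ) * ((w - 1).choose 3 : ℤ)
              - (q.choose (w - 1) : ℤ) * ((w - 2).choose 2 : ℤ))) := by
  rw [numVectorsCosetExact_one_dist_five_general (by omega) hmin (by omega) (by omega), hq]
  push_cast
  ring
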